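/- Let X be a Tychonoff topological space and let 𝔅 be a bornology with compact base on X. Then C_𝔅(X) is productively countably tight if and only if every 𝔅-cover of X consisting of G_δ-sets has a countable 𝔅-subcover. -/

import Mathlib

open Set Topology

universe u

/-- A bornology on `X`: a collection of subsets covering `X`, closed under
taking subsets and under finite unions. -/
structure IsBornology {X : Type*} (𝔅 : Set (Set X)) : Prop where
  covers : ⋃₀ 𝔅 = Set.univ
  empty_mem : ∅ ∈ 𝔅
  subset_mem : ∀ ⦃A B : Set X⦄, B ∈ 𝔅 → A ⊆ B → A ∈ 𝔅
  union_mem : ∀ ⦃A B : Set X⦄, A ∈ 𝔅 → B ∈ 𝔅 → A ∪ B ∈ 𝔅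

/-- `𝔅` has a compact base: every member of `𝔅` is contained in a compact member of `𝔅`. -/
def HasCompactBase {X : Type*} [TopologicalSpace X] (𝔅 : Set (Set X)) : Prop :=
  ∀ B ∈ 𝔅, ∃ K ∈ 𝔅, IsCompact K ∧ B ⊆ K

/-- The set of continuous real-valued functions on `X` (as a bare type, to be
topologized by a bornology). -/
def CFn (X : Type u) [TopologicalSpace X] : Type u := {f : X → ℝ // Continuous f}

/-- The zero function as an element of `CFn X`. -/
def zeroFn (X : Type u) [TopologicalSpace X] : CFn X := ⟨fun _ => 0, continuous_const⟩

/-- The basic "ball" `⟨B, ε⟩[f] = {g : ∀ x ∈ B, |f x − g x| < ε}`. -/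
def unifBall {X : Type u} [TopologicalSpace X] (f : CFn X) (B : Set X) (ε : ℝ) :
    Set (CFn X) :=
  {g | ∀ x ∈ B, |f.1 x - g.1 x| < ε}

/-- The topology of uniform convergence on members of a bornology `𝔅`:
a set is open iff around each of its points it contains a basic ball
`⟨B, ε⟩[f]` with `B ∈ 𝔅`, `ε > 0`.  This makes `CFn X` into `C_𝔅(X)`. -/
def bornTopology {X : Type u} [TopologicalSpace X] (𝔅 : Set (Set X))
    (hB : IsBornology 𝔅) : TopologicalSpace (CFn X) where
  IsOpen U := ∀ f ∈ U, ∃ B ∈ 𝔅, ∃ ε > (0 : ℝ), unifBall f B ε ⊆ U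
  isOpen_univ := fun f _ => ⟨∅, hB.empty_mem, 1, one_pos, fun _ _ => trivial⟩
  isOpen_inter := by
    intro U V hU hV f hf
    obtain ⟨B₁, hB₁, ε₁, hε₁, h₁⟩ := hU f hf.1
    obtain ⟨B₂, hB₂, ε₂, hε₂, h₂⟩ := hV f hf.2
    refine ⟨B₁ ∪ B₂, hB.union_mem hB₁ hB₂, min ε₁ ε₂, lt_min hε₁ hε₂, fun g hg => ⟨?_, ?_⟩⟩
    · exact h₁ fun x hx => lt_of_lt_of_le (hg x (Or.inl hx)) (min_le_left _ _)
    · exact h₂ fun x hx => lt_of_lt_of_le (hg x (Or.inr hx)) (min_le_right _ _)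
  isOpen_sUnion := by
    intro S hS f hf
    obtain ⟨U, hU, hfU⟩ := hf
    obtain ⟨B, hB', ε, hε, h⟩ := hS U hU f hfU
    exact ⟨B, hB', ε, hε, h.trans (Set.subset_sUnion_of_mem hU)⟩

/-- `Ω_z`: the family of all subsets of `Z ∖ {z}` having `z` in their closure. -/
def OmegaAt {Z : Type*} [TopologicalSpace Z] (z : Z) : Set (Set Z) :=
  {A | A ⊆ {z}ᶜ ∧ z ∈ closure A}

/-- `𝒢` is a `𝔅`-cover of `X`: every member of `𝔅` is contained in a member of `𝒢`. -/
def IsBCover {X : Type*} (𝔅 : Set (Set X)) (𝒢 : Set (Set X)) : Prop :=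
  ∀ B ∈ 𝔅, ∃ G ∈ 𝒢, B ⊆ G

/-- `𝒪_𝔅`: the family of all open `𝔅`-covers of `X`. -/
def OpenBCovers {X : Type*} [TopologicalSpace X] (𝔅 : Set (Set X)) : Set (Set (Set X)) :=
  {𝒰 | (∀ U ∈ 𝒰, IsOpen U) ∧ IsBCover 𝔅 𝒰}

/-- `𝒢` is a K-cover of `X`: every compact subset of `X` is contained in a member of `𝒢`. -/
def IsKCover {X : Type*} [TopologicalSpace X] (𝒢 : Set (Set X)) : Prop :=
  ∀ K : Set X, IsCompact K → ∃ G ∈ 𝒢, K ⊆ G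

/-- `𝒦`: the family of all open K-covers of `X`. -/
def KCovers (X : Type*) [TopologicalSpace X] : Set (Set (Set X)) :=
  {𝒰 | (∀ U ∈ 𝒰, IsOpen U) ∧ IsKCover 𝒰}

/-- Player II has a winning strategy in the game `G₁(𝒜, 𝒞)` (of length `ω`):
a function assigning to each finite sequence `(A₀, …, Aₙ)` of moves of player I an
element of `Aₙ`, such that in any play following it the chosen points form a member of `𝒞`. -/
def G1WinII {T : Type*} (𝒜 𝒞 : Set (Set T)) : Prop :=
  ∃ σ : (n : ℕ) → (Fin (n + 1) → Set T) → T,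
    (∀ (n : ℕ) (h : Fin (n + 1) → Set T), (∀ i, h i ∈ 𝒜) → σ n h ∈ h (Fin.last n)) ∧
    ∀ A : ℕ → Set T, (∀ n, A n ∈ 𝒜) →
      (Set.range fun n => σ n fun i => A i.1) ∈ 𝒞

/-- Player II has a winning strategy in the transfinite game `G₁^α(𝒜, 𝒞)` of length `α`. -/
def G1WinIIOrd {T : Type*} (α : Ordinal.{0}) (𝒜 𝒞 : Set (Set T)) : Prop :=
  ∃ σ : (γ : {γ : Ordinal.{0} // γ < α}) → ({δ : Ordinal.{0} // δ ≤ γ.1} → Set T) → T,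
    (∀ (γ : {γ : Ordinal.{0} // γ < α}) (h : {δ : Ordinal.{0} // δ ≤ γ.1} → Set T),
      (∀ δ, h δ ∈ 𝒜) → σ γ h ∈ h ⟨γ.1, le_rfl⟩) ∧
    ∀ A : {γ : Ordinal.{0} // γ < α} → Set T, (∀ γ, A γ ∈ 𝒜) →
      (Set.range fun γ : {γ : Ordinal.{0} // γ < α} =>
        σ γ fun δ => A ⟨δ.1, lt_of_le_of_lt δ.2 γ.2⟩) ∈ 𝒞

/-- The selection principle `S₁(𝒜, 𝒞)`. -/
def S1 {T : Type*} (𝒜 𝒞 : Set (Set T)) : Prop :=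
  ∀ A : ℕ → Set T, (∀ n, A n ∈ 𝒜) →
    ∃ a : ℕ → T, (∀ n, a n ∈ A n) ∧ Set.range a ∈ 𝒞

/-- `Z` has countable tightness. -/
def CountablyTight (Z : Type*) [TopologicalSpace Z] : Prop :=
  ∀ (z : Z) (A : Set Z), z ∈ closure A → ∃ B ⊆ A, B.Countable ∧ z ∈ closure B

/-- `Z` is productively countably tight: `Z × Y` has countable tightness
for every countably tight space `Y`. -/
def ProductivelyCountablyTight (Z : Type u) [TopologicalSpace Z] : Prop :=
  ∀ (Y : Type u) [TopologicalSpace Y], CountablyTight Y → CountablyTight (Z × Y)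

/-- `Z` has tightness at most `κ`. -/
def TightnessLE (Z : Type u) [TopologicalSpace Z] (κ : Cardinal.{u}) : Prop :=
  ∀ (z : Z) (A : Set Z), z ∈ closure A → ∃ B ⊆ A, Cardinal.mk B ≤ κ ∧ z ∈ closure B

/-- `κ ∈ Sp(Z)`: for every space `Y` of tightness at most `κ`, the product `Z × Y`
has tightness at most `κ`. -/
def MemSp (Z : Type u) [TopologicalSpace Z] (κ : Cardinal.{u}) : Prop :=
  ∀ (Y : Type u) [TopologicalSpace Y], TightnessLE Y κ → TightnessLE (Z × Y) κ

/-- `G` is a `G_κ`-set: an intersection of at most `κ` open sets. -/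
def IsGKappaSet {X : Type u} [TopologicalSpace X] (κ : Cardinal.{u}) (G : Set X) : Prop :=
  ∃ 𝒪 : Set (Set X), (∀ O ∈ 𝒪, IsOpen O) ∧ Cardinal.mk 𝒪 ≤ κ ∧ G = ⋂₀ 𝒪

/-- `G` is a `G_δ`-set: an intersection of countably many open sets. -/
def IsGDeltaSet {X : Type*} [TopologicalSpace X] (G : Set X) : Prop :=
  ∃ 𝒪 : Set (Set X), (∀ O ∈ 𝒪, IsOpen O) ∧ 𝒪.Countable ∧ G = ⋂₀ 𝒪

/-- A family `ℙ` of collections of subsets of `Z` is `κ`-singular at `z`. -/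
def KappaSingularAt {Z : Type u} [TopologicalSpace Z] (κ : Cardinal.{u})
    (ℙ : Set (Set (Set Z))) (z : Z) : Prop :=
  (∀ ξ ∈ ℙ, ∀ A ∈ ξ, Cardinal.mk A ≤ κ) ∧
  (∀ ξ ∈ ℙ, ∀ F : Finset (Set Z), ↑F ⊆ ξ → (⋂₀ (F : Set (Set Z))).Nonempty) ∧
  (∀ O : Set Z, IsOpen O → z ∈ O → ∃ ξ ∈ ℙ, ∃ A ∈ ξ, A ⊆ O) ∧
  (∀ ℰ ⊆ ℙ, Cardinal.mk ℰ ≤ κ → ∃ c : Set (Set Z) → Set Z,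
    (∀ ξ ∈ ℰ, c ξ ∈ ξ) ∧ z ∉ closure (⋃ ξ ∈ ℰ, c ξ))

/-- `X` is an Alster space. -/
def Alster (X : Type*) [TopologicalSpace X] : Prop :=
  ∀ 𝒢 : Set (Set X), (∀ G ∈ 𝒢, IsGDeltaSet G) → IsKCover 𝒢 →
    ∃ 𝒢' ⊆ 𝒢, 𝒢'.Countable ∧ ⋃₀ 𝒢' = Set.univ

/-- `X` is strongly Alster. -/
def StronglyAlster (X : Type*) [TopologicalSpace X] : Prop :=
  ∀ 𝒢 : Set (Set X), (∀ G ∈ 𝒢, IsGDeltaSet G) → IsKCover 𝒢 →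
    ∃ 𝒢' ⊆ 𝒢, 𝒢'.Countable ∧ IsKCover 𝒢'

/-- `X` is productively Lindelöf. -/
def ProductivelyLindelof (X : Type u) [TopologicalSpace X] : Prop :=
  ∀ (Y : Type u) [TopologicalSpace Y], LindelofSpace Y → LindelofSpace (X × Y)

/-- `X` is hemicompact. -/
def Hemicompact (X : Type*) [TopologicalSpace X] : Prop :=
  ∃ K : ℕ → Set X, (∀ n, IsCompact (K n)) ∧ ∀ C : Set X, IsCompact C → ∃ n, C ⊆ K n

/-- Separation of a compact set from the complement of an open set. -/
theorem aux_sep {X : Type u} [TopologicalSpace X] [T35Space X] {K O : Set X}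
    (hK : IsCompact K) (hO : IsOpen O) (hKO : K ⊆ O) :
    ∃ f : X → ℝ, Continuous f ∧ (∀ x, 0 ≤ f x) ∧ (∀ x, f x ≤ 1) ∧ (∀ x ∈ K, f x = 0) ∧
      ∀ x ∉ O, f x = 1 := by
  refine IsCompact.induction_on (p := fun s => ∃ f : X → ℝ, Continuous f ∧ (∀ x, 0 ≤ f x) ∧
    (∀ x, f x ≤ 1) ∧ (∀ x ∈ s, f x = 0) ∧ ∀ x ∉ O, f x = 1) hK ?_ ?_ ?_ ?_
  · exact ⟨fun _ => 1, continuous_const, by simp, by simp, by simp, by simp⟩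
  · rintro s t hst ⟨f, h1, h2, h3, h4, h5⟩
    exact ⟨f, h1, h2, h3, fun x hx => h4 x (hst hx), h5⟩
  · rintro s t ⟨f, h1, h2, h3, h4, h5⟩ ⟨g, g1, g2, g3, g4, g5⟩
    refine ⟨fun x => f x * g x, h1.mul g1, fun x => mul_nonneg (h2 x) (g2 x),
      fun x => mul_le_one₀ (h3 x) (g2 x) (g3 x), ?_, ?_⟩
    · rintro x (hx | hx)
      · simp [h4 x hx]
      · simp [g4 x hx]
    · intro x hx
      simp [h5 x hx, g5 x hx]
  · intro x hx
    obtain ⟨f, hf, hfx, hfO⟩ :=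
      CompletelyRegularSpace.completely_regular_isOpen x O hO (hKO hx)
    have hf' : Continuous fun y => (f y : ℝ) := continuous_subtype_val.comp hf
    refine ⟨{y | (f y : ℝ) < 1 / 2}, mem_nhdsWithin_of_mem_nhds
      ((isOpen_lt hf' continuous_const).mem_nhds (by simp [hfx])),
      fun y => 2 * max ((f y : ℝ) - 1 / 2) 0, by fun_prop, fun y => by positivity, ?_, ?_, ?_⟩
    · intro y
      have := (f y).2.2
      have : max ((f y : ℝ) - 1 / 2) 0 ≤ 1 / 2 := max_le (by linarith) (by norm_num)
      linarith
    · intro y hy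
      have hy' : (f y : ℝ) < 1 / 2 := hy
      have : max ((f y : ℝ) - 1 / 2) 0 = 0 := max_eq_right (by linarith)
      simp only [this, mul_zero]
    · intro y hy
      have h1 : f y = 1 := hfO hy
      simp only [h1]
      norm_num

/-- A compact set inside a `G_δ`-set is contained in a zero set inside the `G_δ`-set. -/
theorem aux_zero {X : Type u} [TopologicalSpace X] [T35Space X] {K G : Set X}
    (hK : IsCompact K) (hG : IsGDeltaSet G) (hKG : K ⊆ G) :
    ∃ h : X → ℝ, Continuous h ∧ (∀ x ∈ K, h x = 0) ∧ ∀ x ∉ G, 0 < h x := by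
  obtain ⟨𝒪, hO, hc, rfl⟩ := hG
  have hne : (insert univ 𝒪).Nonempty := insert_nonempty _ _
  obtain ⟨O, hOr⟩ := (hc.insert univ).exists_eq_range hne
  have hOo : ∀ n, IsOpen (O n) := by
    intro n
    have : O n ∈ insert univ 𝒪 := hOr ▸ mem_range_self n
    rcases this with h | h
    · rw [h]; exact isOpen_univ
    · exact hO _ h
  have hKO : ∀ n, K ⊆ O n := by
    intro n
    have : O n ∈ insert univ 𝒪 := hOr ▸ mem_range_self n
    rcases this with h | h
    · rw [h]; exact subset_univ _
    · exact hKG.trans (sInter_subset_of_mem h)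
  choose f f1 f2 f3 f4 f5 using fun n => aux_sep hK (hOo n) (hKO n)
  have hs : Summable fun n : ℕ => ((1 : ℝ) / 2) ^ n := summable_geometric_two
  have hb : ∀ n x, ‖((1 : ℝ) / 2) ^ n * f n x‖ ≤ ((1 : ℝ) / 2) ^ n := by
    intro n x
    rw [Real.norm_of_nonneg (mul_nonneg (by positivity) (f2 n x))]
    exact mul_le_of_le_one_right (by positivity) (f3 n x)
  refine ⟨fun x => ∑' n, ((1 : ℝ) / 2) ^ n * f n x,
    continuous_tsum (fun n => continuous_const.mul (f1 n)) hs hb, ?_, ?_⟩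
  · intro x hx
    simp [f4 _ x hx]
  · intro x hx
    simp only [mem_sInter, not_forall] at hx
    obtain ⟨U, hU, hxU⟩ := hx
    have : U ∈ range O := hOr ▸ mem_insert_of_mem _ hU
    obtain ⟨n, rfl⟩ := this
    refine (Summable.of_norm_bounded hs (fun n => hb n x)).tsum_pos
      (fun i => mul_nonneg (by positivity) (f2 i x)) n ?_
    rw [f5 n x hxU]
    positivity

/-- Basic balls are neighbourhoods. -/
theorem aux_ball {X : Type u} [TopologicalSpace X] (𝔅 : Set (Set X)) (hB : IsBornology 𝔅)
    (f : CFn X) {B : Set X} (hBB : B ∈ 𝔅) {ε : ℝ} (hε : 0 < ε) :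
    ∃ U : Set (CFn X), IsOpen[bornTopology 𝔅 hB] U ∧ f ∈ U ∧ U ⊆ unifBall f B ε := by
  refine ⟨{g | ∃ δ < ε, ∀ x ∈ B, |f.1 x - g.1 x| ≤ δ}, ?_, ⟨0, hε, by simp⟩, ?_⟩
  · rintro g ⟨δ, hδ, hg⟩
    refine ⟨B, hBB, (ε - δ) / 2, by linarith, fun k hk => ⟨(ε + δ) / 2, by linarith, ?_⟩⟩
    intro x hx
    have h1 := hg x hx
    have h2 := hk x hx
    have h3 := abs_sub_le (f.1 x) (g.1 x) (k.1 x)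
    linarith
  · rintro g ⟨δ, hδ, hg⟩ x hx
    exact (hg x hx).trans_lt hδ

/-- Closure in the product, in terms of basic balls. -/
theorem aux_closure {X : Type u} [TopologicalSpace X] (𝔅 : Set (Set X)) (hB : IsBornology 𝔅)
    {Y : Type u} [TopologicalSpace Y] (f : CFn X) (y : Y) (A : Set (CFn X × Y)) :
    letI := bornTopology 𝔅 hB
    (f, y) ∈ closure A ↔ ∀ B ∈ 𝔅, ∀ ε > (0 : ℝ), ∀ V : Set Y, IsOpen V → y ∈ V →
      ∃ p ∈ A, p.1 ∈ unifBall f B ε ∧ p.2 ∈ V := by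
  letI := bornTopology 𝔅 hB
  constructor
  · intro h B hBB ε hε V hV hy
    obtain ⟨U, hU, hfU, hUs⟩ := aux_ball 𝔅 hB f hBB hε
    obtain ⟨p, hp, hpA⟩ := mem_closure_iff.1 h (U ×ˢ V) (hU.prod hV) ⟨hfU, hy⟩
    exact ⟨p, hpA, hUs hp.1, hp.2⟩
  · intro h
    rw [mem_closure_iff]
    intro W hW hfW
    obtain ⟨U, V, hU, hV, hfU, hyV, hUV⟩ := isOpen_prod_iff.1 hW f y hfW
    obtain ⟨B, hBB, ε, hε, hs⟩ := hU f hfU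
    obtain ⟨p, hpA, hp1, hp2⟩ := h B hBB ε hε V hV hyV
    exact ⟨p, hUV ⟨hs hp1, hp2⟩, hpA⟩

/-- The fan topology on `Option (I × ℕ)`. -/
def fanTopology (I : Type u) : TopologicalSpace (Option (I × ℕ)) where
  IsOpen U := none ∈ U → ∀ i, ∃ N, ∀ m ≥ N, some (i, m) ∈ U
  isOpen_univ := fun _ _ => ⟨0, fun _ _ => trivial⟩
  isOpen_inter := by
    intro U V hU hV h i
    obtain ⟨N, hN⟩ := hU h.1 i
    obtain ⟨M, hM⟩ := hV h.2 i
    exact ⟨max N M, fun m hm => ⟨hN m (le_trans (le_max_left _ _) hm),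
      hM m (le_trans (le_max_right _ _) hm)⟩⟩
  isOpen_sUnion := by
    rintro S hS ⟨U, hU, h⟩ i
    obtain ⟨N, hN⟩ := hS U hU h i
    exact ⟨N, fun m hm => ⟨U, hU, hN m hm⟩⟩

theorem fan_tight (I : Type u) : @CountablyTight (Option (I × ℕ)) (fanTopology I) := by
  letI := fanTopology I
  intro z A hz
  by_cases hzA : z ∈ A
  · exact ⟨{z}, by simpa using hzA, countable_singleton z, subset_closure rfl⟩
  rw [mem_closure_iff] at hz
  cases z with
  | some p =>
    obtain ⟨q, hq, hqA⟩ := hz {some p} (fun h => by simp at h) rfl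
    exact absurd (hq ▸ hqA) hzA
  | none =>
    have : ∃ i, ∀ N, ∃ m ≥ N, some (i, m) ∈ A := by
      by_contra hcon
      push Not at hcon
      obtain ⟨q, hq, hqA⟩ := hz Aᶜ (fun _ i => hcon i) hzA
      exact hq hqA
    obtain ⟨i, hi⟩ := this
    refine ⟨A ∩ range fun m => some (i, m), inter_subset_left,
      (countable_range _).mono inter_subset_right, ?_⟩
    rw [mem_closure_iff]
    intro U hU hn
    obtain ⟨N, hN⟩ := hU hn i
    obtain ⟨m, hm, hmA⟩ := hi N
    exact ⟨_, hN m hm, hmA, m, rfl⟩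


/-- `C_𝔅(X)` is productively countably tight iff every `𝔅`-cover of `X`
consisting of `G_δ`-sets has a countable `𝔅`-subcover. -/
theorem stmt8 {X : Type u} [TopologicalSpace X] [T35Space X]
    (𝔅 : Set (Set X)) (hB : IsBornology 𝔅) (hcb : HasCompactBase 𝔅) :
    @ProductivelyCountablyTight (CFn X) (bornTopology 𝔅 hB) ↔
      ∀ 𝒢 : Set (Set X), (∀ G ∈ 𝒢, IsGDeltaSet G) → IsBCover 𝔅 𝒢 →
        ∃ 𝒢' ⊆ 𝒢, 𝒢'.Countable ∧ IsBCover 𝔅 𝒢' := by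
  constructor
  · intro hP 𝒢 hG hcov
    by_contra hcon
    have key : ∀ B : 𝔅, ∃ (G : Set X) (h : X → ℝ), G ∈ 𝒢 ∧ Continuous h ∧
        (∀ x ∈ B.1, h x = 0) ∧ ∀ x ∉ G, 0 < h x := by
      rintro ⟨B, hBB⟩
      obtain ⟨K, hK𝔅, hK, hBK⟩ := hcb B hBB
      obtain ⟨G, hG𝒢, hKG⟩ := hcov K hK𝔅
      obtain ⟨h, h1, h2, h3⟩ := aux_zero hK (hG G hG𝒢) hKG
      exact ⟨G, h, hG𝒢, h1, fun x hx => h2 x (hBK hx), h3⟩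
    choose G h hG𝒢 h1 h2 h3 using key
    letI := fanTopology (↥𝔅)
    letI := bornTopology 𝔅 hB
    let φ : ↥𝔅 × ℕ → CFn X := fun p => ⟨fun x => p.2 * h p.1 x, continuous_const.mul (h1 p.1)⟩
    let F : ↥𝔅 × ℕ → CFn X × Option (↥𝔅 × ℕ) := fun p => (φ p, some p)
    have hcl : (zeroFn X, (none : Option (↥𝔅 × ℕ))) ∈ closure (range F) := by
      rw [aux_closure 𝔅 hB]
      intro B hBB ε hε V hV hn
      obtain ⟨N, hN⟩ := hV hn ⟨B, hBB⟩
      refine ⟨_, ⟨(⟨B, hBB⟩, N), rfl⟩, ?_, hN N le_rfl⟩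
      intro x hx
      simpa [F, φ, zeroFn, h2 ⟨B, hBB⟩ x hx] using hε
    obtain ⟨C, hCF, hCc, hC⟩ := hP (Option (↥𝔅 × ℕ)) (fan_tight _) _ _ hcl
    -- the countable set of indices
    have hinj : Function.Injective F := by
      intro p q hpq
      exact Option.some_injective _ (congrArg Prod.snd hpq)
    let J : Set ↥𝔅 := Prod.fst '' (F ⁻¹' C)
    have hJ : J.Countable := (hCc.preimage hinj).image _
    have hnot : ¬ IsBCover 𝔅 (G '' J) := fun hc =>
      hcon ⟨G '' J, by rintro _ ⟨i, -, rfl⟩; exact hG𝒢 i, hJ.image _, hc⟩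
    unfold IsBCover at hnot
    push Not at hnot
    obtain ⟨B, hBB, hBn⟩ := hnot
    have hm : ∀ i : ↥𝔅, ∃ N : ℕ, i ∈ J → ∀ m ≥ N, ∃ x ∈ B, 1 ≤ (m : ℝ) * h i x := by
      intro i
      by_cases hi : i ∈ J
      · obtain ⟨x, hxB, hxG⟩ := not_subset.1 (hBn (G i) ⟨i, hi, rfl⟩)
        have hpos := h3 i x hxG
        obtain ⟨N, hN⟩ := exists_nat_ge (1 / h i x)
        refine ⟨N, fun _ m hm => ⟨x, hxB, ?_⟩⟩
        rw [div_le_iff₀ hpos] at hN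
        refine hN.trans (mul_le_mul_of_nonneg_right (by exact_mod_cast hm) hpos.le)
      · exact ⟨0, fun h => absurd h hi⟩
    choose N hN using hm
    rw [aux_closure 𝔅 hB] at hC
    obtain ⟨p, hpC, hp1, hp2⟩ := hC B hBB 1 one_pos
      {q | ∀ r : ↥𝔅 × ℕ, q = some r → N r.1 ≤ r.2}
      (fun _ i => ⟨N i, fun m hm r hr => by cases hr; exact hm⟩)
      (fun r hr => by cases hr)
    obtain ⟨r, rfl⟩ := hCF hpC
    obtain ⟨x, hxB, hx⟩ := hN r.1 ⟨r, hpC, rfl⟩ r.2 (hp2 r rfl)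
    have h4 : |(0 : ℝ) - r.2 * h r.1 x| < 1 := hp1 x hxB
    rw [zero_sub, abs_neg] at h4
    exact absurd (lt_of_le_of_lt (le_abs_self _) h4) (not_lt.2 hx)
  · intro hS Y _ hY
    letI := bornTopology 𝔅 hB
    rintro ⟨f, y⟩ A hA
    have hA' := (aux_closure 𝔅 hB f y A).1 hA
    have key : ∀ (B : 𝔅) (n : ℕ), ∃ C ⊆ A, C.Countable ∧
        (∀ p ∈ C, p.1 ∈ unifBall f B.1 (1 / ((n : ℝ) + 1))) ∧ y ∈ closure (Prod.snd '' C) := by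
      rintro ⟨B, hBB⟩ n
      have hy : y ∈ closure (Prod.snd '' {p ∈ A | p.1 ∈ unifBall f B (1 / ((n : ℝ) + 1))}) := by
        rw [mem_closure_iff]
        intro V hV hyV
        obtain ⟨p, hpA, hp1, hp2⟩ := hA' B hBB (1 / ((n : ℝ) + 1)) (by positivity) V hV hyV
        exact ⟨p.2, hp2, p, ⟨hpA, hp1⟩, rfl⟩
      obtain ⟨D, hD, hDc, hyD⟩ := hY _ _ hy
      obtain ⟨C, hCs, hCc, hCD⟩ : ∃ C ⊆ {p ∈ A | p.1 ∈ unifBall f B (1 / ((n : ℝ) + 1))},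
          C.Countable ∧ Prod.snd '' C = D := by
        haveI : Nonempty (CFn X × Y) := ⟨(f, y)⟩
        have hD' : ∀ d ∈ D, ∃ p ∈ {p ∈ A | p.1 ∈ unifBall f B (1 / ((n : ℝ) + 1))}, p.2 = d :=
          fun d hd => hD hd
        choose! s hs1 hs2 using hD'
        refine ⟨s '' D, by rintro _ ⟨d, hd, rfl⟩; exact hs1 d hd, hDc.image _, ?_⟩
        ext d
        constructor
        · rintro ⟨_, ⟨d', hd', rfl⟩, rfl⟩
          rw [hs2 d' hd']; exact hd'
        · intro hd
          exact ⟨_, ⟨d, hd, rfl⟩, hs2 d hd⟩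
      exact ⟨C, fun p hp => (hCs hp).1, hCc, fun p hp => (hCs hp).2, hCD ▸ hyD⟩
    choose C hCA hCc hCb hCy using key
    let G : ↥𝔅 → Set X := fun B =>
      ⋂₀ ⋃ n : ℕ, (fun p : CFn X × Y => {x | |f.1 x - p.1.1 x| < 1 / ((n : ℝ) + 1)}) '' C B n
    obtain ⟨𝒢', hs, hc, hcov⟩ := hS (range G) (by
      rintro _ ⟨B, rfl⟩
      refine ⟨_, ?_, countable_iUnion fun n => (hCc B n).image _, rfl⟩
      intro O hO
      obtain ⟨n, p, -, rfl⟩ := mem_iUnion.1 hO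
      exact isOpen_lt ((f.2.sub p.1.2).abs) continuous_const) (by
      intro B hBB
      refine ⟨_, ⟨⟨B, hBB⟩, rfl⟩, ?_⟩
      intro x hx O hO
      obtain ⟨n, p, hp, rfl⟩ := mem_iUnion.1 hO
      exact hCb ⟨B, hBB⟩ n p hp x hx)
    have hs' : ∀ g ∈ 𝒢', ∃ B, G B = g := fun g hg => hs hg
    haveI : Nonempty ↥𝔅 := ⟨⟨∅, hB.empty_mem⟩⟩
    choose! b hb using hs'
    refine ⟨⋃ g ∈ 𝒢', ⋃ n, C (b g) n, ?_, ?_, ?_⟩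
    · exact iUnion₂_subset fun g _ => iUnion_subset fun n => hCA _ _
    · exact hc.biUnion fun g _ => countable_iUnion fun n => hCc _ _
    · rw [aux_closure 𝔅 hB]
      intro B hBB ε hε V hV hyV
      obtain ⟨g, hg, hBg⟩ := hcov B hBB
      obtain ⟨n, hn⟩ := exists_nat_one_div_lt hε
      obtain ⟨_, hpV, p, hp, rfl⟩ := mem_closure_iff.1 (hCy (b g) n) V hV hyV
      refine ⟨p, mem_iUnion₂.2 ⟨g, hg, mem_iUnion.2 ⟨n, hp⟩⟩, ?_, hpV⟩
      intro x hx
      have hxG : x ∈ G (b g) := by rw [hb g hg]; exact hBg hx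
      have := hxG _ (mem_iUnion.2 ⟨n, p, hp, rfl⟩)
      exact lt_trans this hn
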